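/- arXiv:math/0607502 — 2 statements merged into one kernel-verified Lean document; each statement's English description precedes it below -/
import Mathlib

section
/- Given two points z and ζ in ℂ² such that ‖z−ζ‖ ≤ ‖z+ζ‖, the inequality 2‖π₂(z)−π₂(ζ)‖ ≥ ‖z−ζ‖·max{‖z‖, ‖ζ‖, ‖z−ζ‖} holds. -/
open Complex

noncomputable section

/-- The point `(a, b, c)` of `ℂ³` with the Euclidean (Hermitian) norm. -/
def mk3 (a b c : ℂ) : EuclideanSpace ℂ (Fin 3) :=
  (WithLp.equiv 2 (Fin 3 → ℂ)).symm ![a, b, c]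

/-- `π₂(z₁, z₂) = (z₁², z₂², z₁z₂)`. -/
def pi2 (z : EuclideanSpace ℂ (Fin 2)) : EuclideanSpace ℂ (Fin 3) :=
  mk3 (z 0 ^ 2) (z 1 ^ 2) (z 0 * z 1)

/-!
Put `u = z - ζ` and `v = z + ζ`. By polarization `z ⊗ z - ζ ⊗ ζ` is half the symmetric tensor
`u ⊗ v + v ⊗ u`, whose squared norm is `2 (‖u‖² ‖v‖² + ‖⟪u, v⟫‖²)`; hence
`‖u‖ ‖v‖ ≤ √2 ‖z ⊗ z - ζ ⊗ ζ‖`. The point `π₂ z` lists the entries of the symmetric matrix `z ⊗ z`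
with the off-diagonal one counted once instead of twice, which costs at most another factor `√2`.
Finally `‖u‖ ≤ ‖v‖` makes `‖v‖` an upper bound for the maximum.
-/

section NormedSpace

variable {E : Type*} [SeminormedAddCommGroup E] [NormedSpace ℝ E] {x y : E}

lemma norm_left_le_norm_add_of_norm_sub_le (h : ‖x - y‖ ≤ ‖x + y‖) : ‖x‖ ≤ ‖x + y‖ := by
  have two_mul_norm : 2 * ‖x‖ = ‖(x + y) + (x - y)‖ := by
    rw [add_add_sub_cancel, ← two_smul ℝ x, norm_smul, Real.norm_two]
  linarith [norm_add_le (x + y) (x - y)]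

lemma norm_right_le_norm_add_of_norm_sub_le (h : ‖x - y‖ ≤ ‖x + y‖) : ‖y‖ ≤ ‖x + y‖ := by
  rw [norm_sub_rev, add_comm] at h
  rw [add_comm]
  exact norm_left_le_norm_add_of_norm_sub_le h

end NormedSpace

open scoped TensorProduct

lemma sub_tmul_add_add_add_tmul_sub {R M : Type*} [CommRing R] [AddCommGroup M] [Module R M]
    (x y : M) :
    (x - y) ⊗ₜ[R] (x + y) + (x + y) ⊗ₜ[R] (x - y) =
      (2 : R) • (x ⊗ₜ[R] x - y ⊗ₜ[R] y) := by
  simp only [TensorProduct.sub_tmul, TensorProduct.add_tmul, TensorProduct.tmul_add,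
    TensorProduct.tmul_sub, two_smul]
  abel

section InnerProductSpace

variable (𝕜 : Type*) {E : Type*} [RCLike 𝕜] [NormedAddCommGroup E] [InnerProductSpace 𝕜 E]

lemma norm_tmul_add_tmul_swap_sq (u v : E) :
    ‖u ⊗ₜ[𝕜] v + v ⊗ₜ[𝕜] u‖ ^ 2 = 2 * ((‖u‖ * ‖v‖) ^ 2 + ‖inner 𝕜 u v‖ ^ 2) := by
  have re_inner_swap : RCLike.re (inner 𝕜 (u ⊗ₜ[𝕜] v) (v ⊗ₜ[𝕜] u)) = ‖inner 𝕜 u v‖ ^ 2 := by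
    rw [TensorProduct.inner_tmul, inner_mul_symm_re_eq_norm, norm_mul, norm_inner_symm v u, sq]
  rw [norm_add_sq (𝕜 := 𝕜), re_inner_swap, TensorProduct.norm_tmul, TensorProduct.norm_tmul]
  ring

lemma norm_sub_mul_norm_add_sq_le_two_mul_norm_tmul_self_sub_sq (x y : E) :
    (‖x - y‖ * ‖x + y‖) ^ 2 ≤ 2 * ‖x ⊗ₜ[𝕜] x - y ⊗ₜ[𝕜] y‖ ^ 2 := by
  have polarization := norm_tmul_add_tmul_swap_sq 𝕜 (x - y) (x + y)
  rw [sub_tmul_add_add_add_tmul_sub, norm_smul, RCLike.norm_two, mul_pow] at polarization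
  linarith [sq_nonneg ‖inner 𝕜 (x - y) (x + y)‖]

end InnerProductSpace

lemma norm_tmul_self_sub_sq_eq_sum {𝕜 ι : Type*} [RCLike 𝕜] [Fintype ι]
    (x y : EuclideanSpace 𝕜 ι) :
    ‖x ⊗ₜ[𝕜] x - y ⊗ₜ[𝕜] y‖ ^ 2 = ∑ i, ∑ j, ‖x i * x j - y i * y j‖ ^ 2 := by
  classical
  let b := EuclideanSpace.basisFun ι 𝕜
  rw [← (b.tensorProduct b).repr.norm_map, EuclideanSpace.norm_sq_eq, Fintype.sum_prod_type]
  simp [b, OrthonormalBasis.tensorProduct_repr_tmul_apply, mul_comm]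

lemma norm_pi2_sub_sq (z ζ : EuclideanSpace ℂ (Fin 2)) :
    ‖pi2 z - pi2 ζ‖ ^ 2 =
      ‖z 0 ^ 2 - ζ 0 ^ 2‖ ^ 2 + ‖z 1 ^ 2 - ζ 1 ^ 2‖ ^ 2 + ‖z 0 * z 1 - ζ 0 * ζ 1‖ ^ 2 := by
  simp [EuclideanSpace.norm_sq_eq, Fin.sum_univ_three, pi2, mk3]

lemma norm_tmul_self_sub_sq_le_two_mul_norm_pi2_sub_sq (z ζ : EuclideanSpace ℂ (Fin 2)) :
    ‖z ⊗ₜ[ℂ] z - ζ ⊗ₜ[ℂ] ζ‖ ^ 2 ≤ 2 * ‖pi2 z - pi2 ζ‖ ^ 2 := by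
  rw [norm_tmul_self_sub_sq_eq_sum, norm_pi2_sub_sq]
  simp only [Fin.sum_univ_two, ← sq, mul_comm (z 1) (z 0), mul_comm (ζ 1) (ζ 0)]
  linarith [sq_nonneg ‖z 0 ^ 2 - ζ 0 ^ 2‖, sq_nonneg ‖z 1 ^ 2 - ζ 1 ^ 2‖]

lemma norm_sub_mul_norm_add_le_two_mul_norm_pi2_sub (z ζ : EuclideanSpace ℂ (Fin 2)) :
    ‖z - ζ‖ * ‖z + ζ‖ ≤ 2 * ‖pi2 z - pi2 ζ‖ := by
  refine le_of_sq_le_sq ?_ (by positivity)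
  calc (‖z - ζ‖ * ‖z + ζ‖) ^ 2
      ≤ 2 * ‖z ⊗ₜ[ℂ] z - ζ ⊗ₜ[ℂ] ζ‖ ^ 2 :=
        norm_sub_mul_norm_add_sq_le_two_mul_norm_tmul_self_sub_sq ℂ z ζ
    _ ≤ 2 * (2 * ‖pi2 z - pi2 ζ‖ ^ 2) := by
        gcongr
        exact norm_tmul_self_sub_sq_le_two_mul_norm_pi2_sub_sq z ζ
    _ = (2 * ‖pi2 z - pi2 ζ‖) ^ 2 := by ring

/-- If `‖z−ζ‖ ≤ ‖z+ζ‖`, then `2‖π₂(z)−π₂(ζ)‖ ≥ ‖z−ζ‖·max{‖z‖, ‖ζ‖, ‖z−ζ‖}`. -/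
theorem stmt1 (z ζ : EuclideanSpace ℂ (Fin 2)) (h : ‖z - ζ‖ ≤ ‖z + ζ‖) :
    2 * ‖pi2 z - pi2 ζ‖ ≥ ‖z - ζ‖ * max (max ‖z‖ ‖ζ‖) ‖z - ζ‖ := by
  have max_le_norm_add : max (max ‖z‖ ‖ζ‖) ‖z - ζ‖ ≤ ‖z + ζ‖ :=
    max_le (max_le (norm_left_le_norm_add_of_norm_sub_le h)
      (norm_right_le_norm_add_of_norm_sub_le h)) h
  calc ‖z - ζ‖ * max (max ‖z‖ ‖ζ‖) ‖z - ζ‖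
      ≤ ‖z - ζ‖ * ‖z + ζ‖ := by gcongr
    _ ≤ 2 * ‖pi2 z - pi2 ζ‖ := norm_sub_mul_norm_add_le_two_mul_norm_pi2_sub z ζ
end
end

section
/- Let N ≥ 2 be a natural number, let δ = Ev(N)/2, and let z, ζ ∈ ℂ² be such that ‖z−φ_k(ζ)‖_∞ ≥ ‖z−ζ‖_∞ for every k = 1, …, N. Then ‖π_N(z)−π_N(ζ)‖ ≥ min{ ‖z−ζ‖_∞²/12 , ‖z,ζ‖_∞^{N−δ}·‖z−ζ‖_∞^δ / ((8/3)^{N−δ}·2^δ) }. -/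
open Complex

noncomputable section

/-- The point `(a, b)` of `ℂ²` with the Euclidean (Hermitian) norm. -/
def mk2 (a b : ℂ) : EuclideanSpace ℂ (Fin 2) :=
  (WithLp.equiv 2 (Fin 2 → ℂ)).symm ![a, b]

/-- `π_N(z₁, z₂) = (z₁^N, z₂^N, z₁z₂)`. -/
def piN (N : ℕ) (z : EuclideanSpace ℂ (Fin 2)) : EuclideanSpace ℂ (Fin 3) :=
  mk3 (z 0 ^ N) (z 1 ^ N) (z 0 * z 1)

/-- `ρ_N = e^{2πi/N}`. -/
def rhoN (N : ℕ) : ℂ := Complex.exp (2 * Real.pi * Complex.I / N)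

/-- `φ_k(z₁, z₂) = (ρ_N^k z₁, ρ_N^{−k} z₂)`. -/
def phiN (N k : ℕ) (z : EuclideanSpace ℂ (Fin 2)) : EuclideanSpace ℂ (Fin 2) :=
  mk2 (rhoN N ^ k * z 0) (rhoN N ^ (-(k : ℤ)) * z 1)

/-- `‖z − ζ‖_∞ = max(|z₁−ζ₁|, |z₂−ζ₂|)`. -/
def supDist (z ζ : EuclideanSpace ℂ (Fin 2)) : ℝ :=
  max ‖z 0 - ζ 0‖ ‖z 1 - ζ 1‖

/-- `‖z, ζ‖_∞ = max(|z₁|, |z₂|, |ζ₁|, |ζ₂|)`. -/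
def supPair (z ζ : EuclideanSpace ℂ (Fin 2)) : ℝ :=
  max (max ‖z 0‖ ‖z 1‖)
    (max ‖ζ 0‖ ‖ζ 1‖)

/-- `Ev(N)`: the smallest even integer greater than or equal to `N`. -/
def Ev (N : ℕ) : ℕ := if N % 2 = 0 then N else N + 1

/-!
Let `M` be the largest modulus of a coordinate of `z` or `ζ` and `d` a lower bound for the sup
distance from `z` to the orbit of `ζ`. By the symmetry between the points and between the
coordinates, `M = |z₁|`.

If `|z₁ - u ζ₁| < d / 2` for some `N`-th root of unity `u`, then `|z₂ - u⁻¹ ζ₂| ≥ d`, and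
`z₁ z₂ - ζ₁ ζ₂ = z₁ (z₂ - u⁻¹ ζ₂) + (z₁ - u ζ₁) u⁻¹ ζ₂` has modulus at least `M d - (d / 2) M`.

Otherwise every factor of `z₁ ^ N - ζ₁ ^ N = ∏ (z₁ - u ζ₁)` has modulus at least `d / 2`. At least
`⌊N / 2⌋` of the points `u ζ₁` lie in the half-plane `re (z₁̅ u ζ₁) ≤ 0`, and each of the
corresponding factors has modulus at least `|z₁| = M`.
-/

open Finset Polynomial
open scoped RealInnerProductSpace

theorem norm_le_norm_sub_of_inner_nonpos {E : Type*} [SeminormedAddCommGroup E]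
    [InnerProductSpace ℝ E] {x y : E} (h : ⟪x, y⟫ ≤ 0) : ‖x‖ ≤ ‖x - y‖ := by
  refine (sq_le_sq₀ (norm_nonneg _) (norm_nonneg _)).1 ?_
  rw [norm_sub_sq_real]
  linarith [sq_nonneg ‖y‖]

theorem pow_card_mul_pow_card_sub_le_prod {ι R : Type*} [CommSemiring R] [PartialOrder R]
    [IsOrderedRing R] {s t : Finset ι} {f : ι → R} {A r : R} (hts : t ⊆ s) (hA : 0 ≤ A) (hr : 0 ≤ r)
    (hAf : ∀ i ∈ t, A ≤ f i) (hrf : ∀ i ∈ s, r ≤ f i) :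
    A ^ #t * r ^ (#s - #t) ≤ ∏ i ∈ s, f i := by
  classical
  calc A ^ #t * r ^ (#s - #t)
      = (∏ _i ∈ s \ t, r) * ∏ _i ∈ t, A := by
        rw [prod_const, prod_const, card_sdiff_of_subset hts, mul_comm]
    _ ≤ (∏ i ∈ s \ t, f i) * ∏ i ∈ t, f i := by
        exact mul_le_mul (prod_le_prod (fun _ _ ↦ hr) fun i hi ↦ hrf i (mem_sdiff.1 hi).1)
          (prod_le_prod (fun _ _ ↦ hA) hAf) (prod_nonneg fun _ _ ↦ hA)
          (prod_nonneg fun i hi ↦ hr.trans (hrf i (mem_sdiff.1 hi).1))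
    _ = ∏ i ∈ s, f i := prod_sdiff hts

section RootsOfUnity

variable {N : ℕ}

theorem isPrimitiveRoot_rhoN (hN : N ≠ 0) : IsPrimitiveRoot (rhoN N) N :=
  Complex.isPrimitiveRoot_exp N hN

theorem re_rhoN_zpow_mul (N : ℕ) (j : ℤ) (w : ℂ) :
    (rhoN N ^ j * w).re = ‖w‖ * Real.cos (arg w + 2 * Real.pi * j / N) := by
  have polar : rhoN N ^ j * w = ‖w‖ * exp ((arg w + 2 * Real.pi * j / N : ℝ) * I) := by
    conv_lhs => rw [← norm_mul_exp_arg_mul_I w]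
    rw [rhoN, ← exp_int_mul, mul_left_comm, ← exp_add]
    congr 2
    push_cast
    ring
  rw [polar, re_ofReal_mul, exp_ofReal_mul_I_re]

theorem exists_int_forall_lt_half_cos_nonpos (N : ℕ) (θ : ℝ) :
    ∃ j : ℤ, ∀ i : ℕ, i < N / 2 → Real.cos (θ + 2 * Real.pi * (j + i : ℤ) / N) ≤ 0 := by
  -- The first angle `θ + 2πj/N` past `π/2` is less than one step `2π/N` past it.
  refine ⟨⌈(Real.pi / 2 - θ) * N / (2 * Real.pi)⌉, fun i hi ↦ ?_⟩
  set j := ⌈(Real.pi / 2 - θ) * N / (2 * Real.pi)⌉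
  have hN : (0 : ℝ) < N := by exact_mod_cast (by omega : 0 < N)
  have hiN : (2 * (i + 1) : ℝ) ≤ N := by exact_mod_cast (by omega : 2 * (i + 1) ≤ N)
  have hj_ge : (Real.pi / 2 - θ) * N ≤ j * (2 * Real.pi) :=
    (div_le_iff₀ Real.two_pi_pos).1 (Int.le_ceil _)
  have hj_lt : (j - 1) * (2 * Real.pi) < (Real.pi / 2 - θ) * N :=
    (lt_div_iff₀ Real.two_pi_pos).1 (sub_lt_iff_lt_add.2 (Int.ceil_lt_add_one _))
  have hi_nonneg : 0 ≤ Real.pi * i := by positivity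
  have hi_le : Real.pi * (2 * (i + 1)) ≤ Real.pi * N :=
    mul_le_mul_of_nonneg_left hiN Real.pi_pos.le
  have h_lower : Real.pi / 2 - θ ≤ 2 * Real.pi * (j + i : ℤ) / N := by
    rw [le_div_iff₀ hN]
    push_cast
    linarith
  have h_upper : 2 * Real.pi * (j + i : ℤ) / N ≤ Real.pi / 2 - θ + Real.pi := by
    rw [div_le_iff₀ hN]
    push_cast
    linarith
  exact Real.cos_nonpos_of_pi_div_two_le_of_le (by linarith) (by linarith)

theorem half_le_card_filter_nthRootsFinset_re_nonpos (hN : N ≠ 0) (w : ℂ) :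
    N / 2 ≤ #{u ∈ nthRootsFinset N (1 : ℂ) | (u * w).re ≤ 0} := by
  have hρ := isPrimitiveRoot_rhoN hN
  have hρ0 : rhoN N ≠ 0 := hρ.ne_zero hN
  obtain ⟨j, hj⟩ := exists_int_forall_lt_half_cos_nonpos N (arg w)
  rw [← card_range (N / 2)]
  refine card_le_card_of_injOn (fun i : ℕ ↦ rhoN N ^ (j + i : ℤ)) (fun i hi ↦ ?_) ?_
  · have h_root : (rhoN N ^ (j + i : ℤ)) ^ N = 1 := by
      rw [← zpow_natCast, zpow_comm, zpow_natCast, hρ.pow_eq_one, one_zpow]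
    have h_re : (rhoN N ^ (j + i : ℤ) * w).re ≤ 0 := by
      rw [re_rhoN_zpow_mul]
      exact mul_nonpos_of_nonneg_of_nonpos (norm_nonneg w) (hj i (by simpa using hi))
    exact mem_filter.2 ⟨(mem_nthRootsFinset (Nat.pos_of_ne_zero hN) 1).2 h_root, h_re⟩
  · intro i hi k hk hik
    have lt_of_mem {m : ℕ} (hm : m ∈ (range (N / 2) : Set ℕ)) : m < N :=
      (mem_range.1 hm).trans_le (Nat.div_le_self N 2)
    have h_pow : rhoN N ^ i = rhoN N ^ k := by
      simpa only [zpow_add₀ hρ0, zpow_natCast, mul_right_inj' (zpow_ne_zero j hρ0)] using hik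
    exact hρ.pow_inj (lt_of_mem hi) (lt_of_mem hk) h_pow

theorem pow_half_mul_pow_le_norm_pow_sub_pow (hN : N ≠ 0) {a c : ℂ} {r : ℝ} (hr : 0 ≤ r)
    (h : ∀ u : ℂ, u ^ N = 1 → r ≤ ‖a - u * c‖) :
    ‖a‖ ^ (N / 2) * r ^ (N - N / 2) ≤ ‖a ^ N - c ^ N‖ := by
  have hρ := isPrimitiveRoot_rhoN hN
  have hN_pos := Nat.pos_of_ne_zero hN
  obtain ⟨t, ht, ht_card⟩ := exists_subset_card_eq
    (half_le_card_filter_nthRootsFinset_re_nonpos hN (c * (starRingEnd ℂ) a))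
  have h_far : ∀ u ∈ t, ‖a‖ ≤ ‖a - u * c‖ := fun u hu ↦ by
    apply norm_le_norm_sub_of_inner_nonpos
    rw [Complex.inner, mul_assoc]
    exact (mem_filter.1 (ht hu)).2
  rw [hρ.pow_sub_pow_eq_prod_sub_mul a c hN_pos, norm_prod]
  simpa only [ht_card, hρ.card_nthRootsFinset] using
    pow_card_mul_pow_card_sub_le_prod (ht.trans (filter_subset _ _)) (norm_nonneg a) hr h_far
      fun u hu ↦ h u ((mem_nthRootsFinset hN_pos 1).1 hu)

end RootsOfUnity

theorem norm_mul_half_le_norm_mul_sub_mul {𝕜 : Type*} [NormedField 𝕜] {a b c e u : 𝕜} {d : ℝ}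
    (hu : ‖u‖ = 1) (hea : ‖e‖ ≤ ‖a‖) (h_near : ‖a - u * c‖ ≤ d / 2)
    (h_far : d ≤ ‖b - u⁻¹ * e‖) : ‖a‖ * (d / 2) ≤ ‖a * b - c * e‖ := by
  have hu0 : u ≠ 0 := norm_ne_zero_iff.1 (by rw [hu]; exact one_ne_zero)
  have h_split : a * (b - u⁻¹ * e) = (a * b - c * e) - (a - u * c) * (u⁻¹ * e) := by
    field_simp
    ring
  have h_error : ‖(a - u * c) * (u⁻¹ * e)‖ ≤ d / 2 * ‖a‖ := by
    rw [norm_mul, norm_mul, norm_inv, hu, inv_one, one_mul]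
    exact mul_le_mul h_near hea (norm_nonneg e) ((norm_nonneg _).trans h_near)
  have h_main : ‖a‖ * d ≤ ‖a * b - c * e‖ + d / 2 * ‖a‖ := calc
    ‖a‖ * d ≤ ‖a‖ * ‖b - u⁻¹ * e‖ := mul_le_mul_of_nonneg_left h_far (norm_nonneg a)
    _ = ‖(a * b - c * e) - (a - u * c) * (u⁻¹ * e)‖ := by rw [← norm_mul, h_split]
    _ ≤ ‖a * b - c * e‖ + ‖(a - u * c) * (u⁻¹ * e)‖ := norm_sub_le _ _
    _ ≤ ‖a * b - c * e‖ + d / 2 * ‖a‖ := by gcongr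
  linarith

theorem norm_mul_half_le_or_pow_half_mul_pow_le {N : ℕ} (hN : N ≠ 0) {a b c e : ℂ} {d : ℝ}
    (hd : 0 ≤ d) (hea : ‖e‖ ≤ ‖a‖)
    (h : ∀ u : ℂ, u ^ N = 1 → d ≤ max ‖a - u * c‖ ‖b - u⁻¹ * e‖) :
    ‖a‖ * (d / 2) ≤ ‖a * b - c * e‖ ∨
      ‖a‖ ^ (N / 2) * (d / 2) ^ (N - N / 2) ≤ ‖a ^ N - c ^ N‖ := by
  by_cases h_near : ∃ u : ℂ, u ^ N = 1 ∧ ‖a - u * c‖ < d / 2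
  · obtain ⟨u, hu, hlt⟩ := h_near
    have h_far : d ≤ ‖b - u⁻¹ * e‖ := (le_max_iff.1 (h u hu)).resolve_left (by linarith)
    exact .inl (norm_mul_half_le_norm_mul_sub_mul (norm_eq_one_of_pow_eq_one hu hN) hea hlt.le
      h_far)
  · push Not at h_near
    exact .inr (pow_half_mul_pow_le_norm_pow_sub_pow hN (by positivity) h_near)

section Plane

variable (z ζ : EuclideanSpace ℂ (Fin 2))

/-- The antidiagonal action `(z₁, z₂) ↦ (u z₁, u⁻¹ z₂)` of a nonzero scalar `u` on `ℂ²`. The maps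
`φ_k` are its restriction to `N`-th roots of unity. -/
def antidiag (u : ℂ) (z : EuclideanSpace ℂ (Fin 2)) : EuclideanSpace ℂ (Fin 2) :=
  mk2 (u * z 0) (u⁻¹ * z 1)

/-- The exchange of coordinates `(z₁, z₂) ↦ (z₂, z₁)` on `ℂ²`, which reduces estimates to the case
`|z₂| ≤ |z₁|`. -/
def coordSwap (z : EuclideanSpace ℂ (Fin 2)) : EuclideanSpace ℂ (Fin 2) :=
  mk2 (z 1) (z 0)

theorem phiN_eq_antidiag (N k : ℕ) : phiN N k z = antidiag (rhoN N ^ k) z := by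
  rw [phiN, antidiag, zpow_neg, zpow_natCast]

theorem supDist_nonneg : 0 ≤ supDist z ζ :=
  (norm_nonneg _).trans (le_max_left _ _)

theorem supPair_nonneg : 0 ≤ supPair z ζ :=
  (norm_nonneg _).trans ((le_max_left _ _).trans (le_max_left _ _))

theorem supPair_comm : supPair z ζ = supPair ζ z :=
  max_comm _ _

theorem supPair_coordSwap : supPair (coordSwap z) (coordSwap ζ) = supPair z ζ := by
  simp [supPair, coordSwap, mk2, max_comm]

theorem supDist_le_two_mul_supPair : supDist z ζ ≤ 2 * supPair z ζ := by
  have hz (i : Fin 2) : ‖z i‖ ≤ supPair z ζ := by fin_cases i <;> simp [supPair]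
  have hζ (i : Fin 2) : ‖ζ i‖ ≤ supPair z ζ := by fin_cases i <;> simp [supPair]
  exact max_le (by linarith [norm_sub_le (z 0) (ζ 0), hz 0, hζ 0])
    (by linarith [norm_sub_le (z 1) (ζ 1), hz 1, hζ 1])

theorem supDist_antidiag (u : ℂ) :
    supDist z (antidiag u ζ) = max ‖z 0 - u * ζ 0‖ ‖z 1 - u⁻¹ * ζ 1‖ := by
  simp [supDist, antidiag, mk2]

theorem supDist_coordSwap_antidiag (u : ℂ) :
    supDist (coordSwap z) (antidiag u (coordSwap ζ)) = supDist z (antidiag u⁻¹ ζ) := by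
  simp [supDist, antidiag, coordSwap, mk2, max_comm]

theorem supDist_antidiag_comm {u : ℂ} (hu : ‖u‖ = 1) :
    supDist z (antidiag u ζ) = supDist ζ (antidiag u⁻¹ z) := by
  have norm_sub_mul_comm {v : ℂ} (hv : ‖v‖ = 1) (x y : ℂ) : ‖x - v * y‖ = ‖y - v⁻¹ * x‖ := by
    have hv0 : v ≠ 0 := norm_ne_zero_iff.1 (by rw [hv]; exact one_ne_zero)
    calc ‖x - v * y‖ = ‖v * (v⁻¹ * x - y)‖ := by rw [mul_sub, mul_inv_cancel_left₀ hv0]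
      _ = ‖y - v⁻¹ * x‖ := by rw [norm_mul, hv, one_mul, norm_sub_rev]
  have hu_inv : ‖u⁻¹‖ = 1 := by rw [norm_inv, hu, inv_one]
  rw [supDist_antidiag, supDist_antidiag, norm_sub_mul_comm hu (z 0),
    norm_sub_mul_comm hu_inv (z 1)]

theorem norm_piN_coordSwap_sub (N : ℕ) :
    ‖piN N (coordSwap z) - piN N (coordSwap ζ)‖ = ‖piN N z - piN N ζ‖ := by
  simp [EuclideanSpace.norm_eq, Fin.sum_univ_three, piN, coordSwap, mk2, mk3, mul_comm, add_comm]

theorem norm_pow_sub_pow_le_norm_piN_sub (N : ℕ) :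
    ‖z 0 ^ N - ζ 0 ^ N‖ ≤ ‖piN N z - piN N ζ‖ :=
  PiLp.norm_apply_le (piN N z - piN N ζ) 0

theorem norm_mul_sub_mul_le_norm_piN_sub (N : ℕ) :
    ‖z 0 * z 1 - ζ 0 * ζ 1‖ ≤ ‖piN N z - piN N ζ‖ :=
  PiLp.norm_apply_le (piN N z - piN N ζ) 2

variable {z ζ}

theorem min_le_norm_piN_sub_of_le_supDist_antidiag {N : ℕ} (hN : N ≠ 0) {d : ℝ}
    (hd : 0 ≤ d) (h : ∀ u : ℂ, u ^ N = 1 → d ≤ supDist z (antidiag u ζ)) :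
    min (supPair z ζ * (d / 2)) (supPair z ζ ^ (N / 2) * (d / 2) ^ (N - N / 2)) ≤
      ‖piN N z - piN N ζ‖ := by
  have inv_root {u : ℂ} (hu : u ^ N = 1) : u⁻¹ ^ N = 1 := by rw [inv_pow, hu, inv_one]
  wlog h_points : max ‖ζ 0‖ ‖ζ 1‖ ≤ max ‖z 0‖ ‖z 1‖ generalizing z ζ
  · rw [supPair_comm, norm_sub_rev]
    refine this (fun u hu ↦ ?_) (le_of_not_ge h_points)
    rw [supDist_antidiag_comm ζ z (norm_eq_one_of_pow_eq_one hu hN)]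
    exact h u⁻¹ (inv_root hu)
  wlog h_coords : ‖z 1‖ ≤ ‖z 0‖ generalizing z ζ
  · rw [← supPair_coordSwap, ← norm_piN_coordSwap_sub]
    refine this (fun u hu ↦ ?_) ?_ ?_
    · rw [supDist_coordSwap_antidiag]
      exact h u⁻¹ (inv_root hu)
    · simpa [coordSwap, mk2, max_comm] using h_points
    · simpa [coordSwap, mk2] using le_of_not_ge h_coords
  have hM : supPair z ζ = ‖z 0‖ := by rw [supPair, max_eq_left h_points, max_eq_left h_coords]
  have hζ : ‖ζ 1‖ ≤ ‖z 0‖ := by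
    rw [max_eq_left h_coords] at h_points
    exact (le_max_right _ _).trans h_points
  rw [hM, min_le_iff]
  simp only [supDist_antidiag] at h
  exact (norm_mul_half_le_or_pow_half_mul_pow_le hN hd hζ h).imp
    (·.trans (norm_mul_sub_mul_le_norm_piN_sub z ζ N))
    (·.trans (norm_pow_sub_pow_le_norm_piN_sub z ζ N))

end Plane

theorem Ev_div_two (N : ℕ) : Ev N / 2 = N - N / 2 := by
  unfold Ev
  split_ifs <;> omega

theorem sq_div_twelve_le_mul_half {M d : ℝ} (hd : 0 ≤ d) (hdM : d ≤ 2 * M) :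
    d ^ 2 / 12 ≤ M * (d / 2) := by
  nlinarith

theorem pow_mul_pow_div_le_pow_mul_half_pow {M d : ℝ} (hM : 0 ≤ M) (hd : 0 ≤ d) (m n : ℕ) :
    M ^ m * d ^ n / ((8 / 3) ^ m * 2 ^ n) ≤ M ^ m * (d / 2) ^ n := by
  have h_one : (1 : ℝ) ≤ (8 / 3) ^ m := one_le_pow₀ (by norm_num)
  rw [div_pow d, ← mul_div_assoc]
  gcongr
  exact le_mul_of_one_le_left (by positivity) h_one

theorem stmt3_general (N : ℕ) (hN : N ≠ 0) (z ζ : EuclideanSpace ℂ (Fin 2)) (d : ℝ) (hd : 0 ≤ d)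
    (h : ∀ k : ℕ, 1 ≤ k → k ≤ N → d ≤ supDist z (phiN N k ζ)) :
    min (supPair z ζ * (d / 2)) (supPair z ζ ^ (N - Ev N / 2) * (d / 2) ^ (Ev N / 2)) ≤
      ‖piN N z - piN N ζ‖ := by
  have hρ := isPrimitiveRoot_rhoN hN
  have : NeZero N := ⟨hN⟩
  rw [Ev_div_two, Nat.sub_sub_self (Nat.div_le_self N 2)]
  refine min_le_norm_piN_sub_of_le_supDist_antidiag hN hd fun u hu ↦ ?_
  obtain ⟨k, hk, rfl⟩ := hρ.eq_pow_of_pow_eq_one hu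
  rcases Nat.eq_zero_or_pos k with rfl | hk_pos
  · rw [pow_zero, ← hρ.pow_eq_one, ← phiN_eq_antidiag]
    exact h N (Nat.pos_of_ne_zero hN) le_rfl
  · rw [← phiN_eq_antidiag]
    exact h k hk_pos hk.le

/-- With `δ = Ev(N)/2`, if `‖z−φ_k(ζ)‖_∞ ≥ ‖z−ζ‖_∞` for every `k = 1, …, N`, then
`‖π_N(z)−π_N(ζ)‖ ≥ min{‖z−ζ‖_∞²/12, ‖z,ζ‖_∞^{N−δ}·‖z−ζ‖_∞^δ/((8/3)^{N−δ}·2^δ)}`. -/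
theorem stmt3 (N : ℕ) (hN : 2 ≤ N) (z ζ : EuclideanSpace ℂ (Fin 2))
    (h : ∀ k : ℕ, 1 ≤ k → k ≤ N → supDist z (phiN N k ζ) ≥ supDist z ζ) :
    ‖piN N z - piN N ζ‖ ≥
      min (supDist z ζ ^ 2 / 12)
        (supPair z ζ ^ (N - Ev N / 2) * supDist z ζ ^ (Ev N / 2) /
          (((8 : ℝ) / 3) ^ (N - Ev N / 2) * 2 ^ (Ev N / 2))) :=
  (min_le_min
    (sq_div_twelve_le_mul_half (supDist_nonneg z ζ) (supDist_le_two_mul_supPair z ζ))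
    (pow_mul_pow_div_le_pow_mul_half_pow (supPair_nonneg z ζ) (supDist_nonneg z ζ) _ _)).trans
    (stmt3_general N (by omega) z ζ (supDist z ζ) (supDist_nonneg z ζ) h)
end
end
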